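/- Let f ∈ C_b^4(ℝ^d) be a bounded probability density and let K be a kernel on ℝ^d satisfying (K0)–(K2) and (K3^L) (there is ε(K) ∈ (0,∞] with ∫ K(z) e^{ε‖z‖²/2} dz < ∞ for all ε < ε(K)). Fix x_o with f(x_o) > 0, and let ℓ := log f on {f > 0}. Then for all sequences h_n → 0+ and x_n → x_o (so that eventually f(x_n) > 0 and the following integrals are finite), the quantity C_n := ∫ K(z) (1, z, z zᵀ) [ f(x_n + h_n z) − f(x_n) exp( h_n Dℓ(x_n)ᵀ z + 2^{−1} h_n² zᵀ D²ℓ(x_n) z ) ] dz ∈ ℝ × ℝ^d × Sym_d(ℝ) satisfies: first component = h_n⁴ c(x_o) + o(h_n⁴), second component = h_n³ 𝐜(x_o) + o(h_n³), third component = h_n⁴ C(x_o) + o(h_n⁴), where c(x_o) := f(x_o) ∫ K(z) ( D⁴ℓ(x_o;z)/24 + D¹ℓ(x_o;z) D³ℓ(x_o;z)/6 ) dz, 𝐜(x_o) := f(x_o) ∫ K(z) ( D³ℓ(x_o;z)/6 ) z dz, and C(x_o) := f(x_o) ∫ K(z) ( D⁴ℓ(x_o;z)/24 + D¹ℓ(x_o;z)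 D³ℓ(x_o;z)/6 ) z zᵀ dz. -/

import Mathlib

open MeasureTheory Filter Topology
open scoped ENNReal

noncomputable section

/-- `ℝ^d` as a pi type; `volume` is `d`-dimensional Lebesgue measure. -/
abbrev Vec (d : ℕ) := Fin d → ℝ

/-- The Euclidean norm on `ℝ^d`. -/
def euclNorm {d : ℕ} (z : Vec d) : ℝ := Real.sqrt (∑ i, z i ^ 2)

/-- The `k`-th directional derivative `D^k g(x; z)`. -/
noncomputable def dirDeriv {d : ℕ} (k : ℕ) (g : Vec d → ℝ) (x z : Vec d) : ℝ :=
  iteratedFDeriv ℝ k g x fun _ => z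

/-!
Along each line `t ↦ x + t z`, the density `f = exp ∘ ℓ` and its log-quadratic model have the same
derivatives up to order two at `t = 0`, while their third derivatives differ by `f(x) D³ℓ(x; z)`.
Since this term is odd in `z`, symmetry of the kernel annihilates it under even weights, and the
expansion is then governed by the Lagrange remainder of order four, evaluated at some `s ∈ (0, h)`.
By the exponential Bell polynomials it converges to `f(x) (D⁴ℓ / 24 + D¹ℓ D³ℓ / 6)`. It is
dominated because the exponent `s Dℓ(x; z) + s² D²ℓ(x; z) / 2` is `o(1 + ‖z‖²)` uniformly in `z` as
`s → 0`, so that the model stays below every Gaussian `exp (ε ‖z‖²)`, which the kernel integrates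
for small `ε`.
-/

section Exponential

theorem iteratedDeriv_exp_comp_succ {u : ℝ → ℝ} {t : ℝ} {n : ℕ} (hu : ContDiffAt ℝ (n + 1) u t) :
    iteratedDeriv (n + 1) (Real.exp ∘ u) t = ∑ i ∈ Finset.range (n + 1),
      n.choose i * iteratedDeriv (i + 1) u t * iteratedDeriv (n - i) (Real.exp ∘ u) t := by
  have hderiv : deriv (Real.exp ∘ u) =ᶠ[𝓝 t] deriv u * (Real.exp ∘ u) := by
    filter_upwards [hu.eventually (by simp)] with s hs
    have hdiff : DifferentiableAt ℝ u s := hs.differentiableAt (by simp)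
    simpa [Function.comp_def, mul_comm] using deriv_exp hdiff
  have hu' : ContDiffAt ℝ n (deriv u) t := hu.derivWithin le_rfl
  have hexp : ContDiffAt ℝ n (Real.exp ∘ u) t := (hu.of_le (by simp)).exp
  rw [iteratedDeriv_succ', hderiv.iteratedDeriv_eq, iteratedDeriv_mul hu' hexp]
  simp only [iteratedDeriv_succ']

variable {u : ℝ → ℝ} {t : ℝ}

theorem iteratedDeriv_one_exp_comp (hu : ContDiffAt ℝ 1 u t) :
    iteratedDeriv 1 (Real.exp ∘ u) t = Real.exp (u t) * iteratedDeriv 1 u t := by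
  rw [iteratedDeriv_exp_comp_succ (by simpa using hu)]
  simp [mul_comm]

theorem iteratedDeriv_two_exp_comp (hu : ContDiffAt ℝ 2 u t) :
    iteratedDeriv 2 (Real.exp ∘ u) t =
      Real.exp (u t) * (iteratedDeriv 1 u t ^ 2 + iteratedDeriv 2 u t) := by
  rw [iteratedDeriv_exp_comp_succ (by exact_mod_cast hu)]
  norm_num [Finset.sum_range_succ, iteratedDeriv_one_exp_comp (hu.of_le (by norm_num)),
    -iteratedDeriv_one]
  ring

theorem iteratedDeriv_three_exp_comp (hu : ContDiffAt ℝ 3 u t) :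
    iteratedDeriv 3 (Real.exp ∘ u) t = Real.exp (u t) *
      (iteratedDeriv 1 u t ^ 3 + 3 * iteratedDeriv 1 u t * iteratedDeriv 2 u t +
        iteratedDeriv 3 u t) := by
  rw [iteratedDeriv_exp_comp_succ (by exact_mod_cast hu)]
  norm_num [Finset.sum_range_succ, iteratedDeriv_one_exp_comp (hu.of_le (by norm_num)),
    iteratedDeriv_two_exp_comp (hu.of_le (by norm_num)), -iteratedDeriv_one]
  ring

theorem iteratedDeriv_four_exp_comp (hu : ContDiffAt ℝ 4 u t) :
    iteratedDeriv 4 (Real.exp ∘ u) t = Real.exp (u t) *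
      (iteratedDeriv 1 u t ^ 4 + 6 * iteratedDeriv 1 u t ^ 2 * iteratedDeriv 2 u t +
        3 * iteratedDeriv 2 u t ^ 2 + 4 * iteratedDeriv 1 u t * iteratedDeriv 3 u t +
        iteratedDeriv 4 u t) := by
  rw [iteratedDeriv_exp_comp_succ (by exact_mod_cast hu)]
  norm_num [Finset.sum_range_succ, iteratedDeriv_one_exp_comp (hu.of_le (by norm_num)),
    iteratedDeriv_two_exp_comp (hu.of_le (by norm_num)),
    iteratedDeriv_three_exp_comp (hu.of_le (by norm_num)), Nat.choose_succ_succ,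
    -iteratedDeriv_one]
  ring

end Exponential

section LogQuadraticModel

/-- The exponential of a quadratic polynomial vanishing at `0`, whose logarithm has first and second
derivative `a` and `b` at `0`. -/
def expQuadratic (a b t : ℝ) : ℝ := Real.exp (t * a + t ^ 2 * b / 2)

variable {a b t : ℝ}

theorem expQuadratic_zero : expQuadratic a b 0 = 1 := by simp [expQuadratic]

theorem contDiff_expQuadratic {n : WithTop ℕ∞} : ContDiff ℝ n (expQuadratic a b) := by
  unfold expQuadratic
  fun_prop

theorem iteratedDeriv_one_quadratic :
    iteratedDeriv 1 (fun s : ℝ => s * a + s ^ 2 * b / 2) = fun s => a + s * b := by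
  ext s
  have hlin : HasDerivAt (fun s : ℝ => s * a) a s := by simpa using (hasDerivAt_id s).mul_const a
  have hsq : HasDerivAt (fun s : ℝ => s ^ 2 * b / 2) (s * b) s :=
    (((hasDerivAt_pow 2 s).mul_const b).div_const 2).congr_deriv (by simp; ring)
  simpa [iteratedDeriv_one] using (hlin.fun_add hsq).deriv

theorem iteratedDeriv_two_quadratic :
    iteratedDeriv 2 (fun s : ℝ => s * a + s ^ 2 * b / 2) = fun _ => b := by
  rw [iteratedDeriv_succ, iteratedDeriv_one_quadratic]
  ext s
  simp

theorem iteratedDeriv_quadratic_of_three_le {n : ℕ} (hn : 3 ≤ n) :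
    iteratedDeriv n (fun s : ℝ => s * a + s ^ 2 * b / 2) = 0 := by
  induction n, hn using Nat.le_induction with
  | base => rw [iteratedDeriv_succ, iteratedDeriv_two_quadratic]; ext s; simp
  | succ n _ ih => rw [iteratedDeriv_succ, ih]; ext s; simp

theorem iteratedDeriv_one_expQuadratic :
    iteratedDeriv 1 (expQuadratic a b) t = expQuadratic a b t * (a + t * b) := by
  refine (iteratedDeriv_one_exp_comp (by fun_prop)).trans ?_
  rw [iteratedDeriv_one_quadratic, expQuadratic]

theorem iteratedDeriv_two_expQuadratic :
    iteratedDeriv 2 (expQuadratic a b) t = expQuadratic a b t * ((a + t * b) ^ 2 + b) := by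
  refine (iteratedDeriv_two_exp_comp (by fun_prop)).trans ?_
  rw [iteratedDeriv_one_quadratic, iteratedDeriv_two_quadratic, expQuadratic]

theorem iteratedDeriv_three_expQuadratic :
    iteratedDeriv 3 (expQuadratic a b) t =
      expQuadratic a b t * ((a + t * b) ^ 3 + 3 * (a + t * b) * b) := by
  refine (iteratedDeriv_three_exp_comp (by fun_prop)).trans ?_
  rw [iteratedDeriv_one_quadratic, iteratedDeriv_two_quadratic,
    iteratedDeriv_quadratic_of_three_le le_rfl, Pi.zero_apply, add_zero, expQuadratic]

theorem iteratedDeriv_four_expQuadratic :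
    iteratedDeriv 4 (expQuadratic a b) t =
      expQuadratic a b t * ((a + t * b) ^ 4 + 6 * (a + t * b) ^ 2 * b + 3 * b ^ 2) := by
  refine (iteratedDeriv_four_exp_comp (by fun_prop)).trans ?_
  rw [iteratedDeriv_one_quadratic, iteratedDeriv_two_quadratic,
    iteratedDeriv_quadratic_of_three_le le_rfl, iteratedDeriv_quadratic_of_three_le (by norm_num),
    expQuadratic]
  simp

theorem continuous_expQuadratic : Continuous fun p : ℝ × ℝ × ℝ => expQuadratic p.1 p.2.1 p.2.2 := by
  unfold expQuadratic
  fun_prop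

theorem continuous_iteratedDeriv_four_expQuadratic :
    Continuous fun p : ℝ × ℝ × ℝ => iteratedDeriv 4 (expQuadratic p.1 p.2.1) p.2.2 := by
  simp only [iteratedDeriv_four_expQuadratic, expQuadratic]
  fun_prop

end LogQuadraticModel

section Taylor

theorem exists_eq_taylor_add_lagrange {g : ℝ → ℝ} {n : ℕ} (hg : ContDiff ℝ (n + 1) g) {h : ℝ}
    (hh : 0 < h) : ∃ ξ ∈ Set.Ioo 0 h, g h =
      ∑ k ∈ Finset.range (n + 1), iteratedDeriv k g 0 * h ^ k / k.factorial +
        iteratedDeriv (n + 1) g ξ * h ^ (n + 1) / (n + 1).factorial := by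
  obtain ⟨ξ, hξ, hrem⟩ := taylor_mean_remainder_lagrange_iteratedDeriv hh.ne hg.contDiffOn
  refine ⟨ξ, by rwa [Set.uIoo_of_lt hh] at hξ, ?_⟩
  have htaylor : taylorWithinEval g n (Set.uIcc 0 h) 0 h =
      ∑ k ∈ Finset.range (n + 1), iteratedDeriv k g 0 * h ^ k / k.factorial := by
    rw [taylor_within_apply]
    refine Finset.sum_congr rfl fun k hk => ?_
    have hk' : (k : WithTop ℕ∞) ≤ n + 1 := by
      exact_mod_cast (Finset.mem_range.1 hk).le
    rw [iteratedDerivWithin_eq_iteratedDeriv (uniqueDiffOn_uIcc hh.ne)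
      (hg.of_le hk').contDiffAt Set.left_mem_uIcc, smul_eq_mul, sub_zero]
    field
  rw [htaylor, sub_zero] at hrem
  linarith

theorem exists_sub_eq_of_iteratedDeriv_eq {φ ψ : ℝ → ℝ} {n : ℕ} (hφ : ContDiff ℝ (n + 1) φ)
    (hψ : ContDiff ℝ (n + 1) ψ) (hagree : ∀ k < n, iteratedDeriv k φ 0 = iteratedDeriv k ψ 0)
    {h : ℝ} (hh : 0 < h) : ∃ ξ ∈ Set.Ioo 0 h, φ h - ψ h =
      (iteratedDeriv n φ 0 - iteratedDeriv n ψ 0) * h ^ n / n.factorial +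
        (iteratedDeriv (n + 1) φ ξ - iteratedDeriv (n + 1) ψ ξ) * h ^ (n + 1) /
          (n + 1).factorial := by
  have hsub : ∀ k ≤ n + 1, ∀ t,
      iteratedDeriv k (φ - ψ) t = iteratedDeriv k φ t - iteratedDeriv k ψ t := fun k hk t =>
    iteratedDeriv_sub (hφ.of_le (by exact_mod_cast hk)).contDiffAt
      (hψ.of_le (by exact_mod_cast hk)).contDiffAt
  obtain ⟨ξ, hξ, hrem⟩ := exists_eq_taylor_add_lagrange (g := φ - ψ) (hφ.sub hψ) hh
  have hlow : ∑ k ∈ Finset.range n, iteratedDeriv k (φ - ψ) 0 * h ^ k / k.factorial = 0 :=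
    Finset.sum_eq_zero fun k hk => by
      have hk := Finset.mem_range.1 hk
      simp [hsub k (by lia), hagree k hk]
  rw [Finset.sum_range_succ, hlow, zero_add, hsub n (by lia), hsub (n + 1) le_rfl] at hrem
  exact ⟨ξ, hξ, hrem⟩

theorem eventuallyEq_exp_comp_log_comp {X : Type*} [TopologicalSpace X] {g : X → ℝ} {x : X}
    (hg : ContinuousAt g x) (hx : 0 < g x) : g =ᶠ[𝓝 x] Real.exp ∘ Real.log ∘ g := by
  filter_upwards [hg.eventually_const_lt hx] with y hy using (Real.exp_log hy).symm

theorem exists_sub_expQuadratic_eq {φ : ℝ → ℝ} (hφ : ContDiff ℝ 4 φ) (hpos : 0 < φ 0) {a b c : ℝ}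
    (ha : iteratedDeriv 1 (Real.log ∘ φ) 0 = a) (hb : iteratedDeriv 2 (Real.log ∘ φ) 0 = b)
    (hc : iteratedDeriv 3 (Real.log ∘ φ) 0 = c) {h : ℝ} (hh : 0 < h) :
    ∃ ξ ∈ Set.Ioo 0 h, φ h - φ 0 * expQuadratic a b h = φ 0 * c * h ^ 3 / 6 +
      (iteratedDeriv 4 φ ξ - φ 0 * iteratedDeriv 4 (expQuadratic a b) ξ) * h ^ 4 / 24 := by
  have hlog : ContDiffAt ℝ 4 (Real.log ∘ φ) 0 := hφ.contDiffAt.log hpos.ne'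
  have hexp : ∀ k, iteratedDeriv k φ 0 = iteratedDeriv k (Real.exp ∘ Real.log ∘ φ) 0 := fun k =>
    (eventuallyEq_exp_comp_log_comp hφ.continuous.continuousAt hpos).iteratedDeriv_eq k
  have hval : Real.exp ((Real.log ∘ φ) 0) = φ 0 := Real.exp_log hpos
  have hmodel : ∀ k t, iteratedDeriv k (fun t => φ 0 * expQuadratic a b t) t =
      φ 0 * iteratedDeriv k (expQuadratic a b) t := fun k t => iteratedDeriv_const_mul_field _ _
  have hagree : ∀ k < 3, iteratedDeriv k φ 0 =
      iteratedDeriv k (fun t => φ 0 * expQuadratic a b t) 0 := by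
    intro k hk
    rw [hmodel]
    interval_cases k
    · simp [expQuadratic_zero]
    · rw [hexp, iteratedDeriv_one_exp_comp (hlog.of_le (by norm_num)), hval, ha,
        iteratedDeriv_one_expQuadratic]
      simp [expQuadratic_zero]
    · rw [hexp, iteratedDeriv_two_exp_comp (hlog.of_le (by norm_num)), hval, ha, hb,
        iteratedDeriv_two_expQuadratic]
      simp [expQuadratic_zero]
  have hthird : iteratedDeriv 3 φ 0 -
      iteratedDeriv 3 (fun t => φ 0 * expQuadratic a b t) 0 = φ 0 * c := by
    rw [hmodel, hexp, iteratedDeriv_three_exp_comp (hlog.of_le (by norm_num)), hval, ha, hb, hc,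
      iteratedDeriv_three_expQuadratic, expQuadratic_zero]
    ring
  obtain ⟨ξ, hξ, hrem⟩ := exists_sub_eq_of_iteratedDeriv_eq (n := 3) (by exact_mod_cast hφ)
    (contDiff_const.mul contDiff_expQuadratic) hagree hh
  refine ⟨ξ, hξ, ?_⟩
  rw [hthird, hmodel] at hrem
  simpa [Nat.factorial] using hrem

end Taylor

section DirectionalDerivative

variable {E : Type*} [NormedAddCommGroup E] [NormedSpace ℝ E] {g : E → ℝ} {x z : E} {k : ℕ}

/-- The `k`-th directional derivative of `g` at `x` in direction `z`, on any real normed space; on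
`Vec d` this is `dirDeriv` by definition. -/
def iteratedDirDeriv (k : ℕ) (g : E → ℝ) (x z : E) : ℝ := iteratedFDeriv ℝ k g x fun _ => z

theorem iteratedDirDeriv_one : iteratedDirDeriv 1 g x z = fderiv ℝ g x z :=
  iteratedFDeriv_one_apply _

theorem iteratedDirDeriv_neg :
    iteratedDirDeriv k g x (-z) = (-1) ^ k * iteratedDirDeriv k g x z := by
  simpa [iteratedDirDeriv] using
    (iteratedFDeriv ℝ k g x).map_smul_univ (fun _ => (-1 : ℝ)) fun _ => z

theorem continuous_iteratedDirDeriv : Continuous (iteratedDirDeriv k g x) :=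
  (iteratedFDeriv ℝ k g x).cont.comp (continuous_pi fun _ => continuous_id)

theorem abs_iteratedDirDeriv_le :
    |iteratedDirDeriv k g x z| ≤ ‖iteratedFDeriv ℝ k g x‖ * ‖z‖ ^ k := by
  simpa [iteratedDirDeriv] using (iteratedFDeriv ℝ k g x).le_opNorm fun _ => z

theorem continuousAt_iteratedDirDeriv (hg : ContDiffAt ℝ k g x) :
    ContinuousAt (fun y => iteratedDirDeriv k g y z) x :=
  (hg.continuousAt_iteratedFDeriv le_rfl).eval_const _

theorem iteratedDeriv_comp_add_smul {t : ℝ} (hg : ContDiffAt ℝ k g (x + t • z)) :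
    iteratedDeriv k (fun s => g (x + s • z)) t = iteratedDirDeriv k g (x + t • z) z := by
  induction k generalizing t with
  | zero => simp [iteratedDirDeriv]
  | succ k ih =>
    have hline : ContinuousAt (fun s : ℝ => x + s • z) t := by fun_prop
    have hlow : iteratedDeriv k (fun s => g (x + s • z)) =ᶠ[𝓝 t]
        fun s => iteratedDirDeriv k g (x + s • z) z := by
      filter_upwards [hline.eventually (hg.eventually (by simp))] with s hs
      exact ih (hs.of_le (by simp))
    rw [iteratedDeriv_succ, hlow.deriv_eq]
    exact ContDiffAt.deriv_fderiv_add_smul (by exact_mod_cast hg)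

theorem iteratedDeriv_zero_comp_add_smul (hg : ContDiffAt ℝ k g x) :
    iteratedDeriv k (fun s : ℝ => g (x + s • z)) 0 = iteratedDirDeriv k g x z := by
  simpa using iteratedDeriv_comp_add_smul (g := g) (x := x) (z := z) (t := 0) (by simpa using hg)

end DirectionalDerivative

section LocalExpansion

variable {E : Type*} [NormedAddCommGroup E] [NormedSpace ℝ E] {f : E → ℝ} {x z : E}

/-- The error `f (x + h z) - f x exp (h Dℓ(x; z) + h² D²ℓ(x; z) / 2)`, with `ℓ = log f`, of the
log-quadratic approximation of `f` around `x`. -/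
def logQuadError (f : E → ℝ) (h : ℝ) (x z : E) : ℝ :=
  f (x + h • z) -
    f x * expQuadratic (fderiv ℝ (Real.log ∘ f) x z) (iteratedDirDeriv 2 (Real.log ∘ f) x z) h

/-- The coefficient of `f x * h ^ 3` in the expansion of `logQuadError f h x z`. -/
def logCubicCoeff (f : E → ℝ) (x z : E) : ℝ := iteratedDirDeriv 3 (Real.log ∘ f) x z / 6

/-- The coefficient of `f x * h ^ 4` in the expansion of `logQuadError f h x z`. -/
def logQuarticCoeff (f : E → ℝ) (x z : E) : ℝ :=
  iteratedDirDeriv 4 (Real.log ∘ f) x z / 24 +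
    fderiv ℝ (Real.log ∘ f) x z * iteratedDirDeriv 3 (Real.log ∘ f) x z / 6

/-- What is left of `logQuadError f h x z` after the cubic term, in units of `h ^ 4`. -/
def quarticRemainder (f : E → ℝ) (h : ℝ) (x z : E) : ℝ :=
  (logQuadError f h x z - h ^ 3 * (f x * logCubicCoeff f x z)) / h ^ 4

/-- The Lagrange form of `quarticRemainder f h x z`, at an intermediate step size `s ∈ (0, h)`. -/
def lagrangeRemainder (f : E → ℝ) (s : ℝ) (x z : E) : ℝ :=
  (iteratedDirDeriv 4 f (x + s • z) z - f x * iteratedDeriv 4 (expQuadratic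
    (fderiv ℝ (Real.log ∘ f) x z) (iteratedDirDeriv 2 (Real.log ∘ f) x z)) s) / 24

theorem iteratedDirDeriv_four_eq (hf : ContDiffAt ℝ 4 f x) (hx : 0 < f x) :
    iteratedDirDeriv 4 f x z = f x * iteratedDeriv 4 (expQuadratic (fderiv ℝ (Real.log ∘ f) x z)
      (iteratedDirDeriv 2 (Real.log ∘ f) x z)) 0 + 24 * (f x * logQuarticCoeff f x z) := by
  have hlog : ContDiffAt ℝ 4 (Real.log ∘ f) x := hf.log hx.ne'
  have hline : ContDiffAt ℝ 4 (fun s : ℝ => (Real.log ∘ f) (x + s • z)) 0 :=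
    ContDiffAt.comp (g := Real.log ∘ f) 0 (by simpa using hlog) (by fun_prop)
  have hexp := eventuallyEq_exp_comp_log_comp (g := fun s : ℝ => f (x + s • z)) (x := 0)
    (ContinuousAt.comp (by simpa using hf.continuousAt) (by fun_prop)) (by simpa using hx)
  have hderiv : ∀ k ≤ 4, iteratedDeriv k (fun s : ℝ => (Real.log ∘ f) (x + s • z)) 0 =
      iteratedDirDeriv k (Real.log ∘ f) x z := fun k hk =>
    iteratedDeriv_zero_comp_add_smul (hlog.of_le (by exact_mod_cast hk))
  have hval : Real.exp ((Real.log ∘ f) (x + (0 : ℝ) • z)) = f x := by simp [Real.exp_log hx]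
  rw [← iteratedDeriv_zero_comp_add_smul hf, hexp.iteratedDeriv_eq]
  refine (iteratedDeriv_four_exp_comp hline).trans ?_
  rw [hval, hderiv 1 (by simp), hderiv 2 (by simp), hderiv 3 (by simp), hderiv 4 (by simp),
    iteratedDeriv_four_expQuadratic, expQuadratic_zero, iteratedDirDeriv_one, logQuarticCoeff]
  ring

theorem exists_quarticRemainder_eq_lagrangeRemainder (hf : ContDiff ℝ 4 f) (hx : 0 < f x) {h : ℝ}
    (hh : 0 < h) : ∃ s ∈ Set.Ioo 0 h, quarticRemainder f h x z = lagrangeRemainder f s x z := by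
  have hlog : ContDiffAt ℝ 4 (Real.log ∘ f) x := hf.contDiffAt.log hx.ne'
  have hderiv : ∀ k ≤ 4, iteratedDeriv k (Real.log ∘ fun s : ℝ => f (x + s • z)) 0 =
      iteratedDirDeriv k (Real.log ∘ f) x z := fun k hk =>
    iteratedDeriv_zero_comp_add_smul (hlog.of_le (by exact_mod_cast hk))
  obtain ⟨s, hs, herror⟩ := exists_sub_expQuadratic_eq (φ := fun s : ℝ => f (x + s • z))
    (by fun_prop) (by simpa using hx) ((hderiv 1 (by simp)).trans iteratedDirDeriv_one)
    (hderiv 2 (by simp)) (hderiv 3 (by simp)) hh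
  refine ⟨s, hs, ?_⟩
  rw [iteratedDeriv_comp_add_smul hf.contDiffAt] at herror
  simp only [zero_smul, add_zero] at herror
  rw [quarticRemainder, logQuadError, herror, logCubicCoeff, lagrangeRemainder]
  field

theorem lagrangeRemainder_zero (hf : ContDiffAt ℝ 4 f x) (hx : 0 < f x) :
    lagrangeRemainder f 0 x z = f x * logQuarticCoeff f x z := by
  rw [lagrangeRemainder, zero_smul, add_zero, iteratedDirDeriv_four_eq hf hx]
  ring

end LocalExpansion

section SubGaussianGrowth

variable {ι E : Type*} [NormedAddCommGroup E] {l : Filter ι} {F G : ι → E → ℝ}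

theorem isLittleO_mul_add_sq_mul {α : Type*} {m : Filter α} {s a b : α → ℝ} {v : α → E}
    (hs : Tendsto s m (𝓝 0)) (ha : a =O[m] fun p => ‖v p‖) (hb : b =O[m] fun p => ‖v p‖ ^ 2) :
    (fun p => s p * a p + s p ^ 2 * b p / 2) =o[m] fun p => 1 + ‖v p‖ ^ 2 := by
  have hnorm : (fun p => ‖v p‖) =O[m] fun p => 1 + ‖v p‖ ^ 2 :=
    Asymptotics.isBigO_of_le _ fun p => by
      rw [norm_norm, Real.norm_of_nonneg (by positivity)]
      nlinarith [sq_nonneg (‖v p‖ - 1)]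
  have hnormsq : (fun p => ‖v p‖ ^ 2) =O[m] fun p => 1 + ‖v p‖ ^ 2 :=
    Asymptotics.isBigO_of_le _ fun p => by
      rw [Real.norm_of_nonneg (by positivity), Real.norm_of_nonneg (by positivity)]
      linarith
  have hs_one : s =o[m] fun _ => (1 : ℝ) := (Asymptotics.isLittleO_one_iff ℝ).2 hs
  have hs_sq : (fun p => s p ^ 2) =o[m] fun _ => (1 : ℝ) :=
    (Asymptotics.isLittleO_one_iff ℝ).2 (by simpa using hs.pow 2)
  simpa [div_eq_inv_mul] using (hs_one.mul_isBigO (ha.trans hnorm)).add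
    ((hs_sq.mul_isBigO (hb.trans hnormsq)).const_mul_left 2⁻¹)

theorem le_mul_exp_sq {ε : ℝ} (hε : 0 < ε) (r : ℝ) : r ≤ (1 + 1 / ε) * Real.exp (ε * r ^ 2) := by
  calc r ≤ (1 + 1 / ε) * (ε * r ^ 2 + 1) := by
        field_simp
        nlinarith [mul_nonneg hε.le (sq_nonneg (r - 1)), sq_nonneg (ε * r), sq_nonneg (r + 1)]
    _ ≤ (1 + 1 / ε) * Real.exp (ε * r ^ 2) := by
        gcongr
        exact Real.add_one_le_exp _

theorem eventually_prod_top_iff {α β : Type*} {l : Filter α} {p : α × β → Prop} :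
    (∀ᶠ q in l ×ˢ ⊤, p q) ↔ ∀ᶠ i in l, ∀ z, p (i, z) := by
  simp [← principal_univ, eventually_prod_principal_iff]

/-- The family `F i` is `O(exp (ε ‖z‖ ^ 2))` for every `ε > 0`, with a constant that serves all `z`
and eventually all `i` along `l`; the factor `⊤` in the filter expresses uniformity in `z`. -/
def SubGaussianGrowth (l : Filter ι) (F : ι → E → ℝ) : Prop :=
  ∀ ε > 0, (fun p : ι × E => F p.1 p.2) =O[l ×ˢ ⊤] fun p => Real.exp (ε * ‖p.2‖ ^ 2)

namespace SubGaussianGrowth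

theorem add (hF : SubGaussianGrowth l F) (hG : SubGaussianGrowth l G) :
    SubGaussianGrowth l fun i z => F i z + G i z :=
  fun ε hε => (hF ε hε).add (hG ε hε)

theorem sub (hF : SubGaussianGrowth l F) (hG : SubGaussianGrowth l G) :
    SubGaussianGrowth l fun i z => F i z - G i z :=
  fun ε hε => (hF ε hε).sub (hG ε hε)

theorem mul (hF : SubGaussianGrowth l F) (hG : SubGaussianGrowth l G) :
    SubGaussianGrowth l fun i z => F i z * G i z := fun ε hε => by
  refine ((hF (ε / 2) (half_pos hε)).mul (hG (ε / 2) (half_pos hε))).congr_right fun p => ?_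
  rw [← Real.exp_add]
  ring_nf

theorem pow (hF : SubGaussianGrowth l F) (n : ℕ) :
    SubGaussianGrowth l fun i z => F i z ^ n := by
  induction n with
  | zero =>
    intro ε hε
    refine Asymptotics.isBigO_of_le _ fun p => ?_
    have hexp : 1 ≤ Real.exp (ε * ‖p.2‖ ^ 2) := Real.one_le_exp (by positivity)
    simpa using hexp
  | succ n ih => simpa only [pow_succ] using ih.mul hF

theorem norm : SubGaussianGrowth l fun _ (z : E) => ‖z‖ := by
  intro ε hε
  refine Asymptotics.IsBigO.of_bound (1 + 1 / ε) (Eventually.of_forall fun p => ?_)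
  rw [norm_norm, Real.norm_of_nonneg (Real.exp_nonneg _)]
  exact le_mul_exp_sq hε _

theorem of_isBigO_norm_pow {n : ℕ}
    (hF : (fun p : ι × E => F p.1 p.2) =O[l ×ˢ ⊤] fun p => ‖p.2‖ ^ n) : SubGaussianGrowth l F :=
  fun ε hε => hF.trans (norm.pow n ε hε)

theorem of_isBigO_one (hF : (fun p : ι × E => F p.1 p.2) =O[l ×ˢ ⊤] fun _ => (1 : ℝ)) :
    SubGaussianGrowth l F :=
  of_isBigO_norm_pow (n := 0) (by simpa only [pow_zero] using hF)

theorem of_tendsto {c : ι → ℝ} {a : ℝ} (hc : Tendsto c l (𝓝 a)) :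
    SubGaussianGrowth l fun i (_ : E) => c i :=
  of_isBigO_one ((hc.isBigO_one ℝ).comp_tendsto tendsto_fst)

theorem expQuadratic {s : ι → ℝ} {a b : ι → E → ℝ} (hs : Tendsto s l (𝓝 0))
    (ha : (fun p : ι × E => a p.1 p.2) =O[l ×ˢ ⊤] fun p => ‖p.2‖)
    (hb : (fun p : ι × E => b p.1 p.2) =O[l ×ˢ ⊤] fun p => ‖p.2‖ ^ 2) :
    SubGaussianGrowth l fun i z => expQuadratic (a i z) (b i z) (s i) := by
  intro ε hε
  have hs' : Tendsto (fun p : ι × E => s p.1) (l ×ˢ ⊤) (𝓝 0) := hs.comp tendsto_fst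
  have hexponent := isLittleO_mul_add_sq_mul hs' ha hb
  refine Real.isBigO_exp_comp_exp_comp.2 (isBoundedUnder_of_eventually_le (a := ε) ?_)
  filter_upwards [hexponent.bound hε] with p hp
  rw [Real.norm_of_nonneg (by positivity : 0 ≤ 1 + ‖p.2‖ ^ 2)] at hp
  simp only [Pi.sub_apply]
  linarith [(Real.le_norm_self _).trans hp]

theorem iteratedDeriv_four_expQuadratic {s : ι → ℝ} {a b : ι → E → ℝ} (hs : Tendsto s l (𝓝 0))
    (ha : (fun p : ι × E => a p.1 p.2) =O[l ×ˢ ⊤] fun p => ‖p.2‖)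
    (hb : (fun p : ι × E => b p.1 p.2) =O[l ×ˢ ⊤] fun p => ‖p.2‖ ^ 2) :
    SubGaussianGrowth l fun i z =>
      iteratedDeriv 4 (_root_.expQuadratic (a i z) (b i z)) (s i) := by
  have hconst (c : ℝ) : SubGaussianGrowth l fun _ (_ : E) => c := of_tendsto tendsto_const_nhds
  have hb' : SubGaussianGrowth l b := of_isBigO_norm_pow hb
  have hslope : SubGaussianGrowth l fun i z => a i z + s i * b i z :=
    (of_isBigO_norm_pow (n := 1) (by simpa using ha)).add ((of_tendsto hs).mul hb')
  simpa only [_root_.iteratedDeriv_four_expQuadratic] using (expQuadratic hs ha hb).mul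
    (((hslope.pow 4).add (((hconst 6).mul (hslope.pow 2)).mul hb')).add
      ((hconst 3).mul (hb'.pow 2)))

end SubGaussianGrowth

end SubGaussianGrowth

section GaussianMoment

variable {E : Type*} [NormedAddCommGroup E] [MeasurableSpace E] {μ : Measure E} {W : E → ℝ}

/-- The weight `W` has a finite exponential moment of the squared norm; this is condition
`(K3^L)` up to the choice of an equivalent norm. -/
def HasGaussianMoment (W : E → ℝ) (μ : Measure E) : Prop :=
  ∃ ε > 0, Integrable (fun z => W z * Real.exp (ε * ‖z‖ ^ 2)) μ

namespace HasGaussianMoment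

variable {ι : Type*} {l : Filter ι} {F : ι → E → ℝ}

theorem exists_eventually_dominated (hW : HasGaussianMoment W μ) (hF : SubGaussianGrowth l F) :
    ∃ B, Integrable B μ ∧ ∀ᶠ i in l, ∀ z, ‖W z * F i z‖ ≤ B z := by
  obtain ⟨ε, hε, hint⟩ := hW
  obtain ⟨C, hC⟩ := (hF ε hε).bound
  refine ⟨fun z => C * ‖W z * Real.exp (ε * ‖z‖ ^ 2)‖, hint.norm.const_mul C, ?_⟩
  filter_upwards [eventually_prod_top_iff.1 hC] with i hi z
  calc ‖W z * F i z‖ = ‖W z‖ * ‖F i z‖ := norm_mul _ _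
    _ ≤ ‖W z‖ * (C * ‖Real.exp (ε * ‖z‖ ^ 2)‖) := by gcongr; exact hi z
    _ = C * ‖W z * Real.exp (ε * ‖z‖ ^ 2)‖ := by rw [norm_mul]; ring

variable [OpensMeasurableSpace E]

theorem aestronglyMeasurable (hW : HasGaussianMoment W μ) : AEStronglyMeasurable W μ := by
  obtain ⟨ε, -, hint⟩ := hW
  have hexp : Measurable fun z : E => Real.exp (-(ε * ‖z‖ ^ 2)) := by fun_prop
  refine (hint.aestronglyMeasurable.mul hexp.aestronglyMeasurable).congr (.of_forall fun z => ?_)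
  simp [mul_assoc, ← Real.exp_add]

theorem mul_clm [NormedSpace ℝ E] (hW : HasGaussianMoment W μ) (φ : E →L[ℝ] ℝ) :
    HasGaussianMoment (fun z => W z * φ z) μ := by
  have hWmeas := hW.aestronglyMeasurable
  obtain ⟨ε, hε, hint⟩ := hW
  refine ⟨ε / 2, half_pos hε, (hint.norm.const_mul (‖φ‖ * (1 + 1 / (ε / 2)))).mono' ?_
    (.of_forall fun z => ?_)⟩
  · have hcont : Continuous fun z : E => Real.exp (ε / 2 * ‖z‖ ^ 2) := by fun_prop
    exact (hWmeas.mul φ.continuous.measurable.aestronglyMeasurable).mul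
      hcont.measurable.aestronglyMeasurable
  have hφ : ‖φ z‖ ≤ ‖φ‖ * ((1 + 1 / (ε / 2)) * Real.exp (ε / 2 * ‖z‖ ^ 2)) :=
    (φ.le_opNorm z).trans (by gcongr; exact le_mul_exp_sq (half_pos hε) _)
  have hexp : Real.exp (ε * ‖z‖ ^ 2) =
      Real.exp (ε / 2 * ‖z‖ ^ 2) * Real.exp (ε / 2 * ‖z‖ ^ 2) := by
    rw [← Real.exp_add]; ring_nf
  simp only [norm_mul, Real.norm_of_nonneg (Real.exp_nonneg _)]
  calc ‖W z‖ * ‖φ z‖ * Real.exp (ε / 2 * ‖z‖ ^ 2)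
      ≤ ‖W z‖ * (‖φ‖ * ((1 + 1 / (ε / 2)) * Real.exp (ε / 2 * ‖z‖ ^ 2))) *
          Real.exp (ε / 2 * ‖z‖ ^ 2) := by gcongr
    _ = ‖φ‖ * (1 + 1 / (ε / 2)) * (‖W z‖ * Real.exp (ε * ‖z‖ ^ 2)) := by rw [hexp]; ring

theorem eventually_integrable_mul (hW : HasGaussianMoment W μ) (hF : SubGaussianGrowth l F)
    (hcont : ∀ᶠ i in l, Continuous (F i)) :
    ∀ᶠ i in l, Integrable (fun z => W z * F i z) μ := by
  obtain ⟨B, hB, hle⟩ := hW.exists_eventually_dominated hF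
  filter_upwards [hle, hcont] with i hi hFi
  exact hB.mono' (hW.aestronglyMeasurable.mul hFi.measurable.aestronglyMeasurable) (.of_forall hi)

theorem tendsto_integral_mul [l.IsCountablyGenerated] (hW : HasGaussianMoment W μ)
    (hF : SubGaussianGrowth l F) (hcont : ∀ᶠ i in l, Continuous (F i)) {G : E → ℝ}
    (hlim : ∀ z, Tendsto (fun i => F i z) l (𝓝 (G z))) :
    Tendsto (fun i => ∫ z, W z * F i z ∂μ) l (𝓝 (∫ z, W z * G z ∂μ)) := by
  obtain ⟨B, hB, hle⟩ := hW.exists_eventually_dominated hF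
  refine tendsto_integral_filter_of_dominated_convergence B ?_
    (hle.mono fun i hi => .of_forall hi) hB (.of_forall fun z => (hlim z).const_mul (W z))
  filter_upwards [hcont] with i hFi
  exact hW.aestronglyMeasurable.mul hFi.measurable.aestronglyMeasurable

end HasGaussianMoment

end GaussianMoment

section Remainder

variable {E : Type*} [NormedAddCommGroup E] [NormedSpace ℝ E] {f g : E → ℝ} {x_o : E}

theorem isBigO_iteratedDirDeriv {ι : Type*} {l : Filter ι} {k : ℕ} {y : ι → E → E}
    (hbdd : (fun p : ι × E => iteratedFDeriv ℝ k g (y p.1 p.2)) =O[l ×ˢ ⊤] fun _ => (1 : ℝ)) :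
    (fun p : ι × E => iteratedDirDeriv k g (y p.1 p.2) p.2) =O[l ×ˢ ⊤] fun p => ‖p.2‖ ^ k := by
  have hle : (fun p : ι × E => iteratedDirDeriv k g (y p.1 p.2) p.2) =O[l ×ˢ ⊤]
      fun p => ‖iteratedFDeriv ℝ k g (y p.1 p.2)‖ * ‖p.2‖ ^ k :=
    Asymptotics.isBigO_of_le _ fun p => abs_iteratedDirDeriv_le.trans (le_abs_self _)
  have hpow := Asymptotics.isBigO_refl (fun p : ι × E => ‖p.2‖ ^ k) (l ×ˢ ⊤)
  simpa using hle.trans (hbdd.norm_left.mul hpow)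

theorem isBigO_iteratedDirDeriv_of_tendsto {ι : Type*} {l : Filter ι} {k : ℕ} {y : ι → E}
    (hg : ContDiffAt ℝ k g x_o) (hy : Tendsto y l (𝓝 x_o)) :
    (fun p : ι × E => iteratedDirDeriv k g (y p.1) p.2) =O[l ×ˢ ⊤] fun p => ‖p.2‖ ^ k :=
  isBigO_iteratedDirDeriv (y := fun i _ => y i) <|
    (((hg.continuousAt_iteratedFDeriv le_rfl).tendsto.comp hy).isBigO_one ℝ).comp_tendsto
      tendsto_fst

theorem subGaussianGrowth_lagrangeRemainder (hf : ContDiffAt ℝ 4 f x_o)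
    (hbdd : ∃ C, ∀ x, ‖iteratedFDeriv ℝ 4 f x‖ ≤ C) (hpos : 0 < f x_o) :
    SubGaussianGrowth (𝓝 ((0 : ℝ), x_o)) fun q z => lagrangeRemainder f q.1 q.2 z := by
  have hlog : ContDiffAt ℝ 4 (Real.log ∘ f) x_o := hf.log hpos.ne'
  have hstep : Tendsto (fun q : ℝ × E => q.1) (𝓝 (0, x_o)) (𝓝 0) := continuousAt_fst
  have hbase : Tendsto (fun q : ℝ × E => q.2) (𝓝 (0, x_o)) (𝓝 x_o) := continuousAt_snd
  have hval : SubGaussianGrowth (𝓝 ((0 : ℝ), x_o)) fun q (_ : E) => f q.2 :=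
    .of_tendsto (hf.continuousAt.tendsto.comp hbase)
  have hgrad : (fun p : (ℝ × E) × E => fderiv ℝ (Real.log ∘ f) p.1.2 p.2)
      =O[𝓝 (0, x_o) ×ˢ ⊤] fun p => ‖p.2‖ := by
    simpa only [iteratedDirDeriv_one, pow_one] using
      isBigO_iteratedDirDeriv_of_tendsto (k := 1) (hlog.of_le (by norm_num)) hbase
  have hhess : (fun p : (ℝ × E) × E => iteratedDirDeriv 2 (Real.log ∘ f) p.1.2 p.2)
      =O[𝓝 (0, x_o) ×ˢ ⊤] fun p => ‖p.2‖ ^ 2 :=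
    isBigO_iteratedDirDeriv_of_tendsto (hlog.of_le (by norm_num)) hbase
  have hfourth : SubGaussianGrowth (𝓝 ((0 : ℝ), x_o))
      fun q z => iteratedDirDeriv 4 f (q.2 + q.1 • z) z := by
    obtain ⟨C, hC⟩ := hbdd
    refine .of_isBigO_norm_pow
      (isBigO_iteratedDirDeriv (y := fun (q : ℝ × E) z => q.2 + q.1 • z) ?_)
    exact .of_bound C (.of_forall fun p => by simpa using hC _)
  simpa only [lagrangeRemainder, div_eq_mul_inv] using
    (hfourth.sub (hval.mul (.iteratedDeriv_four_expQuadratic hstep hgrad hhess))).mul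
      (.of_tendsto (tendsto_const_nhds (x := 24⁻¹)))

theorem continuousAt_lagrangeRemainder (hf : ContDiffAt ℝ 4 f x_o) (hpos : 0 < f x_o) (z : E) :
    ContinuousAt (fun q : ℝ × E => lagrangeRemainder f q.1 q.2 z) (0, x_o) := by
  have hlog : ContDiffAt ℝ 4 (Real.log ∘ f) x_o := hf.log hpos.ne'
  have hbase : ContinuousAt (fun q : ℝ × E => q.2) (0, x_o) := continuousAt_snd
  have hval : ContinuousAt (fun q : ℝ × E => f q.2) (0, x_o) :=
    ContinuousAt.comp (f := Prod.snd) hf.continuousAt hbase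
  have hfourth : ContinuousAt (fun q : ℝ × E => iteratedDirDeriv 4 f (q.2 + q.1 • z) z)
      (0, x_o) :=
    ContinuousAt.comp (g := fun y => iteratedDirDeriv 4 f y z)
      (f := fun q : ℝ × E => q.2 + q.1 • z)
      (by simpa using continuousAt_iteratedDirDeriv (k := 4) hf) (by fun_prop)
  have hdir (k : ℕ) (hk : k ≤ 4) :
      ContinuousAt (fun q : ℝ × E => iteratedDirDeriv k (Real.log ∘ f) q.2 z) (0, x_o) :=
    ContinuousAt.comp (f := Prod.snd)
      (continuousAt_iteratedDirDeriv (hlog.of_le (by exact_mod_cast hk))) hbase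
  have hgrad : ContinuousAt (fun q : ℝ × E => fderiv ℝ (Real.log ∘ f) q.2 z) (0, x_o) := by
    simpa only [iteratedDirDeriv_one] using hdir 1 (by simp)
  have hmodel := ContinuousAt.comp' (x := ((0 : ℝ), x_o))
    continuous_iteratedDeriv_four_expQuadratic.continuousAt
    (hgrad.prodMk ((hdir 2 (by simp)).prodMk continuousAt_fst))
  exact (hfourth.sub (hval.mul hmodel)).div_const 24

theorem eventually_forall_mem_Ioo {X : Type*} [TopologicalSpace X] {x : X} {p : ℝ × X → Prop}
    (hp : ∀ᶠ q in 𝓝 (0, x), p q) :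
    ∀ᶠ q in 𝓝[>] (0 : ℝ) ×ˢ 𝓝 x, ∀ s ∈ Set.Ioo 0 q.1, p (s, q.2) := by
  rw [nhds_prod_eq] at hp
  obtain ⟨pr, hpr, px, hpx, hp⟩ := eventually_prod_iff.1 hp
  obtain ⟨δ, hδ, hball⟩ := Metric.eventually_nhds_iff.1 hpr
  have hlt : ∀ᶠ h in 𝓝[>] (0 : ℝ), h < δ := nhdsWithin_le_nhds (eventually_lt_nhds hδ)
  filter_upwards [hlt.prod_mk hpx] with q hq s hs
  refine hp (hball ?_) hq.2
  rw [Real.dist_0_eq_abs, abs_of_pos hs.1]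
  exact hs.2.trans hq.1

theorem eventually_exists_quarticRemainder_eq (hf : ContDiff ℝ 4 f) (hpos : 0 < f x_o) :
    ∀ᶠ q in 𝓝[>] (0 : ℝ) ×ˢ 𝓝 x_o, ∀ z, ∃ s ∈ Set.Ioo 0 q.1,
      quarticRemainder f q.1 q.2 z = lagrangeRemainder f s q.2 z := by
  have hposx := hf.continuous.continuousAt.eventually_const_lt hpos
  filter_upwards [(eventually_mem_nhdsWithin (a := (0 : ℝ)) (s := Set.Ioi 0)).prod_mk hposx]
    with q hq z
  exact exists_quarticRemainder_eq_lagrangeRemainder hf hq.2 hq.1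

theorem subGaussianGrowth_quarticRemainder (hf : ContDiff ℝ 4 f)
    (hbdd : ∃ C, ∀ x, ‖iteratedFDeriv ℝ 4 f x‖ ≤ C) (hpos : 0 < f x_o) :
    SubGaussianGrowth (𝓝[>] (0 : ℝ) ×ˢ 𝓝 x_o) fun q z => quarticRemainder f q.1 q.2 z := by
  intro ε hε
  obtain ⟨C, hC⟩ := (subGaussianGrowth_lagrangeRemainder hf.contDiffAt hbdd hpos ε hε).bound
  refine .of_bound C (eventually_prod_top_iff.2 ?_)
  filter_upwards [eventually_exists_quarticRemainder_eq hf hpos,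
    eventually_forall_mem_Ioo (eventually_prod_top_iff.1 hC)] with q hlagrange hbound z
  obtain ⟨s, hs, heq⟩ := hlagrange z
  simpa only [heq] using hbound s hs z

theorem tendsto_quarticRemainder (hf : ContDiff ℝ 4 f) (hpos : 0 < f x_o) (z : E) :
    Tendsto (fun q : ℝ × E => quarticRemainder f q.1 q.2 z) (𝓝[>] (0 : ℝ) ×ˢ 𝓝 x_o)
      (𝓝 (f x_o * logQuarticCoeff f x_o z)) := by
  have hlim := (continuousAt_lagrangeRemainder hf.contDiffAt hpos z).tendsto
  rw [lagrangeRemainder_zero hf.contDiffAt hpos] at hlim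
  refine tendsto_iff_eventually.2 fun P hP => ?_
  filter_upwards [eventually_exists_quarticRemainder_eq hf hpos,
    eventually_forall_mem_Ioo (hlim.eventually hP)] with q hlagrange hclose
  obtain ⟨s, hs, heq⟩ := hlagrange z
  simpa only [heq] using hclose s hs

theorem continuous_quarticRemainder (hf : Continuous f) (h : ℝ) (x : E) :
    Continuous (quarticRemainder f h x) := by
  have hmodel : Continuous fun z => expQuadratic (fderiv ℝ (Real.log ∘ f) x z)
      (iteratedDirDeriv 2 (Real.log ∘ f) x z) h :=
    continuous_expQuadratic.comp ((fderiv ℝ (Real.log ∘ f) x).continuous.prodMk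
      (continuous_iteratedDirDeriv.prodMk continuous_const))
  have hshift : Continuous fun z => f (x + h • z) := by fun_prop
  exact ((hshift.sub (hmodel.const_mul (f x))).sub
    ((continuous_iteratedDirDeriv.div_const 6).const_mul (f x) |>.const_mul (h ^ 3))).div_const _

theorem continuous_logCubicCoeff (x : E) : Continuous (logCubicCoeff f x) :=
  continuous_iteratedDirDeriv.div_const 6

theorem continuousAt_logCubicCoeff (hf : ContDiffAt ℝ 3 f x_o) (hpos : 0 < f x_o) (z : E) :
    ContinuousAt (fun x => logCubicCoeff f x z) x_o :=
  (continuousAt_iteratedDirDeriv (k := 3) (hf.log hpos.ne')).div_const 6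

theorem subGaussianGrowth_logCubicCoeff (hf : ContDiffAt ℝ 3 f x_o) (hpos : 0 < f x_o) :
    SubGaussianGrowth (𝓝 x_o) fun x z => logCubicCoeff f x z := by
  have hlog : ContDiffAt ℝ 3 (Real.log ∘ f) x_o := hf.log hpos.ne'
  have hthird := isBigO_iteratedDirDeriv_of_tendsto (k := 3) hlog tendsto_id
  simpa only [logCubicCoeff, div_eq_mul_inv] using
    (SubGaussianGrowth.of_isBigO_norm_pow hthird).mul
      (.of_tendsto (tendsto_const_nhds (x := 6⁻¹)))

end Remainder

section MomentExpansion

theorem integral_eq_zero_of_odd {G : Type*} [AddGroup G] [MeasurableSpace G] [MeasurableNeg G]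
    {μ : Measure G} [μ.IsNegInvariant] {g : G → ℝ} (hg : ∀ z, g (-z) = -g z) :
    ∫ z, g z ∂μ = 0 := by
  have hneg : -∫ z, g z ∂μ = ∫ z, g z ∂μ := by
    simpa only [hg, integral_neg] using integral_neg_eq_self g μ
  linarith

variable {E : Type*} [NormedAddCommGroup E] [NormedSpace ℝ E] [MeasurableSpace E] [BorelSpace E]
  {μ : Measure E} {f W : E → ℝ} {x_o : E}

theorem tendsto_integral_logCubicCoeff (hf : ContDiffAt ℝ 3 f x_o) (hpos : 0 < f x_o)
    (hW : HasGaussianMoment W μ) :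
    Tendsto (fun x => ∫ z, W z * logCubicCoeff f x z ∂μ) (𝓝 x_o)
      (𝓝 (∫ z, W z * logCubicCoeff f x_o z ∂μ)) :=
  hW.tendsto_integral_mul (subGaussianGrowth_logCubicCoeff hf hpos)
    (.of_forall continuous_logCubicCoeff) (continuousAt_logCubicCoeff hf hpos)

theorem tendsto_integral_quarticRemainder (hf : ContDiff ℝ 4 f)
    (hbdd : ∃ C, ∀ x, ‖iteratedFDeriv ℝ 4 f x‖ ≤ C) (hpos : 0 < f x_o)
    (hW : HasGaussianMoment W μ) :
    Tendsto (fun q : ℝ × E => ∫ z, W z * quarticRemainder f q.1 q.2 z ∂μ)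
      (𝓝[>] (0 : ℝ) ×ˢ 𝓝 x_o) (𝓝 (f x_o * ∫ z, W z * logQuarticCoeff f x_o z ∂μ)) := by
  simp only [← integral_const_mul, mul_left_comm (f x_o)]
  exact hW.tendsto_integral_mul (subGaussianGrowth_quarticRemainder hf hbdd hpos)
    (.of_forall fun q => continuous_quarticRemainder hf.continuous q.1 q.2)
    (tendsto_quarticRemainder hf hpos)

theorem eventually_integral_logQuadError_eq (hf : ContDiff ℝ 4 f)
    (hbdd : ∃ C, ∀ x, ‖iteratedFDeriv ℝ 4 f x‖ ≤ C) (hpos : 0 < f x_o)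
    (hW : HasGaussianMoment W μ) :
    ∀ᶠ q in 𝓝[>] (0 : ℝ) ×ˢ 𝓝 x_o, ∫ z, W z * logQuadError f q.1 q.2 z ∂μ =
      q.1 ^ 3 * (f q.2 * ∫ z, W z * logCubicCoeff f q.2 z ∂μ) +
        q.1 ^ 4 * ∫ z, W z * quarticRemainder f q.1 q.2 z ∂μ := by
  have hcubic : ∀ᶠ x in 𝓝 x_o, Integrable (fun z => W z * logCubicCoeff f x z) μ :=
    hW.eventually_integrable_mul
      (subGaussianGrowth_logCubicCoeff (hf.of_le (by norm_num)).contDiffAt hpos)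
      (.of_forall continuous_logCubicCoeff)
  have hrem := hW.eventually_integrable_mul (subGaussianGrowth_quarticRemainder hf hbdd hpos)
    (.of_forall fun q => continuous_quarticRemainder hf.continuous q.1 q.2)
  filter_upwards [hrem, tendsto_snd.eventually hcubic,
    tendsto_fst.eventually self_mem_nhdsWithin] with q hrem hcubic (hq : 0 < q.1)
  rw [← integral_const_mul, ← integral_const_mul, ← integral_const_mul,
    ← integral_add ((hcubic.const_mul _).const_mul _) (hrem.const_mul _)]
  congr with z
  rw [quarticRemainder]
  field

theorem tendsto_integral_logQuadError_div_pow_three (hf : ContDiff ℝ 4 f)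
    (hbdd : ∃ C, ∀ x, ‖iteratedFDeriv ℝ 4 f x‖ ≤ C) (hpos : 0 < f x_o)
    (hW : HasGaussianMoment W μ) :
    Tendsto (fun q : ℝ × E => (∫ z, W z * logQuadError f q.1 q.2 z ∂μ) / q.1 ^ 3)
      (𝓝[>] (0 : ℝ) ×ˢ 𝓝 x_o) (𝓝 (f x_o * ∫ z, W z * logCubicCoeff f x_o z ∂μ)) := by
  have hcubic := (hf.continuous.tendsto x_o).mul
    (tendsto_integral_logCubicCoeff (hf.of_le (by norm_num)).contDiffAt hpos hW)
  have hstep : Tendsto Prod.fst (𝓝[>] (0 : ℝ) ×ˢ 𝓝 x_o) (𝓝 0) :=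
    tendsto_fst.mono_right nhdsWithin_le_nhds
  have hsum := (hcubic.comp tendsto_snd).add
    (hstep.mul (tendsto_integral_quarticRemainder hf hbdd hpos hW))
  rw [zero_mul, add_zero] at hsum
  refine hsum.congr' ?_
  filter_upwards [eventually_integral_logQuadError_eq hf hbdd hpos hW,
    tendsto_fst.eventually self_mem_nhdsWithin] with q hexpansion (hq : 0 < q.1)
  rw [hexpansion, Function.comp_apply]
  field

theorem tendsto_integral_logQuadError_div_pow_four_of_even [μ.IsNegInvariant] (hf : ContDiff ℝ 4 f)
    (hbdd : ∃ C, ∀ x, ‖iteratedFDeriv ℝ 4 f x‖ ≤ C) (hpos : 0 < f x_o)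
    (hW : HasGaussianMoment W μ) (heven : ∀ z, W (-z) = W z) :
    Tendsto (fun q : ℝ × E => (∫ z, W z * logQuadError f q.1 q.2 z ∂μ) / q.1 ^ 4)
      (𝓝[>] (0 : ℝ) ×ˢ 𝓝 x_o) (𝓝 (f x_o * ∫ z, W z * logQuarticCoeff f x_o z ∂μ)) := by
  have hcubic (x : E) : ∫ z, W z * logCubicCoeff f x z ∂μ = 0 := integral_eq_zero_of_odd fun z => by
    rw [heven, logCubicCoeff, logCubicCoeff, iteratedDirDeriv_neg]
    ring
  refine (tendsto_integral_quarticRemainder hf hbdd hpos hW).congr' ?_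
  filter_upwards [eventually_integral_logQuadError_eq hf hbdd hpos hW,
    tendsto_fst.eventually self_mem_nhdsWithin] with q hexpansion (hq : 0 < q.1)
  rw [hexpansion, hcubic]
  field

theorem statement10_general [μ.IsNegInvariant] (hf : ContDiff ℝ 4 f)
    (hbdd : ∃ C, ∀ x, ‖iteratedFDeriv ℝ 4 f x‖ ≤ C) (hpos : 0 < f x_o)
    {K : E → ℝ} (hK : HasGaussianMoment K μ) (heven : ∀ z, K (-z) = K z)
    {ι : Type*} {l : Filter ι} {h : ι → ℝ} (hh : Tendsto h l (𝓝[>] 0))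
    {x : ι → E} (hx : Tendsto x l (𝓝 x_o)) :
    Tendsto (fun i => (∫ z, K z * logQuadError f (h i) (x i) z ∂μ) / h i ^ 4) l
      (𝓝 (f x_o * ∫ z, K z * logQuarticCoeff f x_o z ∂μ)) ∧
    (∀ φ : E →L[ℝ] ℝ,
      Tendsto (fun i => (∫ z, K z * logQuadError f (h i) (x i) z * φ z ∂μ) / h i ^ 3) l
        (𝓝 (f x_o * ∫ z, K z * logCubicCoeff f x_o z * φ z ∂μ))) ∧
    ∀ φ ψ : E →L[ℝ] ℝ,
      Tendsto (fun i => (∫ z, K z * logQuadError f (h i) (x i) z * φ z * ψ z ∂μ) / h i ^ 4) l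
        (𝓝 (f x_o * ∫ z, K z * logQuarticCoeff f x_o z * φ z * ψ z ∂μ)) := by
  have hlim := hh.prodMk hx
  refine ⟨?_, fun φ => ?_, fun φ ψ => ?_⟩
  · simpa only [Function.comp_def] using
      (tendsto_integral_logQuadError_div_pow_four_of_even hf hbdd hpos hK heven).comp hlim
  · simpa only [mul_right_comm _ _ (φ _), Function.comp_def] using
      (tendsto_integral_logQuadError_div_pow_three hf hbdd hpos (hK.mul_clm φ)).comp hlim
  · have hweight (z : E) (t : ℝ) : K z * t * φ z * ψ z = K z * φ z * ψ z * t := by ring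
    simp only [hweight]
    simpa only [Function.comp_def] using
      (tendsto_integral_logQuadError_div_pow_four_of_even hf hbdd hpos
        ((hK.mul_clm φ).mul_clm ψ) fun z => by simp [heven]).comp hlim

end MomentExpansion

section EuclideanNorm

variable {d : ℕ}

theorem norm_le_euclNorm (z : Vec d) : ‖z‖ ≤ euclNorm z :=
  (pi_norm_le_iff_of_nonneg (Real.sqrt_nonneg _)).2 fun i => Real.abs_le_sqrt <|
    Finset.single_le_sum (f := fun i => z i ^ 2) (fun _ _ => sq_nonneg _) (Finset.mem_univ i)

theorem hasGaussianMoment_of_integrable_euclNorm {K : Vec d → ℝ} (hK : Measurable K) {ε : ℝ}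
    (hε : 0 < ε) (hint : Integrable fun z => K z * Real.exp (ε * euclNorm z ^ 2 / 2)) :
    HasGaussianMoment K volume := by
  have hmeas : Measurable fun z => K z * Real.exp (ε / 2 * ‖z‖ ^ 2) := by fun_prop
  refine ⟨ε / 2, half_pos hε, hint.mono hmeas.aestronglyMeasurable (.of_forall fun z => ?_)⟩
  rw [norm_mul, norm_mul, Real.norm_of_nonneg (Real.exp_nonneg _),
    Real.norm_of_nonneg (Real.exp_nonneg _), mul_div_right_comm]
  gcongr
  exact norm_le_euclNorm z

theorem hasGaussianMoment_of_forall_lt {K : Vec d → ℝ} (hK : Measurable K) {εK : ℝ≥0∞}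
    (hεK : 0 < εK) (hint : ∀ ε : ℝ, 0 < ε → ENNReal.ofReal ε < εK →
      Integrable fun z => K z * Real.exp (ε * euclNorm z ^ 2 / 2)) :
    HasGaussianMoment K volume := by
  obtain ⟨ε, hε, hε_lt⟩ := ENNReal.lt_iff_exists_nnreal_btwn.1 hεK
  exact hasGaussianMoment_of_integrable_euclNorm hK (by exact_mod_cast hε)
    (hint ε (by exact_mod_cast hε) (by simpa using hε_lt))

theorem even_of_signed_perm_invariant {K : Vec d → ℝ}
    (hK : ∀ ξ : Vec d, (∀ i, ξ i = 1 ∨ ξ i = -1) → ∀ (σ : Equiv.Perm (Fin d)) (z : Vec d),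
      K z = K fun i => ξ i * z (σ i)) (z : Vec d) : K (-z) = K z := by
  simpa using! (hK (fun _ => -1) (by simp) (Equiv.refl _) z).symm

end EuclideanNorm

/-- expansion of the difference between the local moments of `f` and of
its local log-quadratic approximation, with `ℓ = log f`. -/
theorem statement10 {d : ℕ} (hd : 1 ≤ d)
    (f : Vec d → ℝ) (hf : ContDiff ℝ (4 : ℕ∞) f)
    (hfb : ∀ n : ℕ, n ≤ 4 → ∃ C : ℝ, ∀ x : Vec d, ‖iteratedFDeriv ℝ n f x‖ ≤ C)
    (hfpos : ∀ x, 0 ≤ f x) (hfint : (∫ x : Vec d, f x) = 1)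
    (K : Vec d → ℝ) (hKmeas : Measurable K) (hKpos : ∀ z, 0 ≤ K z)
    (hKbd : ∃ C : ℝ, ∀ z, K z ≤ C)
    (hKmom : ∀ r : ℝ, 0 < r → Integrable (fun z => K z * euclNorm z ^ r))
    (hK0 : (∫ z : Vec d, K z) = 1)
    (hK1 : ∀ (ξ : Vec d), (∀ i, ξ i = 1 ∨ ξ i = -1) → ∀ (σ : Equiv.Perm (Fin d)),
      ∀ z : Vec d, K z = K fun i => ξ i * z (σ i))
    (hK2 : ∀ i j : Fin d, (∫ z : Vec d, K z * z i * z j) = if i = j then 1 else 0)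
    (εK : ℝ≥0∞) (hεK : 0 < εK)
    (hK3 : ∀ ε : ℝ, 0 < ε → ENNReal.ofReal ε < εK →
      Integrable (fun z => K z * Real.exp (ε * euclNorm z ^ 2 / 2)))
    (x_o : Vec d) (hx_o : 0 < f x_o)
    (ℓ : Vec d → ℝ) (hℓ : ∀ y, ℓ y = Real.log (f y))
    (h : ℕ → ℝ) (hh : ∀ n, 0 < h n) (hh0 : Tendsto h atTop (𝓝 0))
    (x : ℕ → Vec d) (hx : Tendsto x atTop (𝓝 x_o))
    (Δ : ℕ → Vec d → ℝ)
    (hΔ : ∀ n z, Δ n z =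
      f (x n + h n • z) -
        f (x n) * Real.exp (h n * fderiv ℝ ℓ (x n) z +
          h n ^ 2 * iteratedFDeriv ℝ 2 ℓ (x n) (fun _ => z) / 2)) :
    -- first component: h⁴ c(x_o) + o(h⁴)
    (Tendsto (fun n => (∫ z : Vec d, K z * Δ n z) / h n ^ 4) atTop
      (𝓝 (f x_o * ∫ z : Vec d, K z *
        (dirDeriv 4 ℓ x_o z / 24 + fderiv ℝ ℓ x_o z * dirDeriv 3 ℓ x_o z / 6)))) ∧
    -- second component: h³ 𝐜(x_o) + o(h³)
    (∀ j : Fin d,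
      Tendsto (fun n => (∫ z : Vec d, K z * Δ n z * z j) / h n ^ 3) atTop
        (𝓝 (f x_o * ∫ z : Vec d, K z * (dirDeriv 3 ℓ x_o z / 6) * z j))) ∧
    -- third component: h⁴ C(x_o) + o(h⁴)
    (∀ j k : Fin d,
      Tendsto (fun n => (∫ z : Vec d, K z * Δ n z * z j * z k) / h n ^ 4) atTop
        (𝓝 (f x_o * ∫ z : Vec d, K z *
          (dirDeriv 4 ℓ x_o z / 24 + fderiv ℝ ℓ x_o z * dirDeriv 3 ℓ x_o z / 6) *
          z j * z k))) := by
  obtain rfl : ℓ = Real.log ∘ f := funext hℓ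
  obtain rfl : Δ = fun n => logQuadError f (h n) (x n) := by ext n z; exact hΔ n z
  have hlim : Tendsto h atTop (𝓝[>] 0) := tendsto_nhdsWithin_iff.2 ⟨hh0, .of_forall hh⟩
  obtain ⟨hzeroth, hfirst, hsecond⟩ := statement10_general (by exact_mod_cast hf) (hfb 4 le_rfl)
    hx_o (hasGaussianMoment_of_forall_lt hKmeas hεK hK3) (even_of_signed_perm_invariant hK1) hlim hx
  exact ⟨hzeroth, fun j => hfirst (.proj j), fun j k => hsecond (.proj j) (.proj k)⟩
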